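/- Let p and q be positive integers and let π be a partition of [p+q] with exactly one (p,q)-connecting block B₀; write B₀' = B₀∩{1,...,p} and B₀'' = B₀∩{p+1,...,p+q}. If π ∈ NC_ann(p,q), then every permutation τ ∈ S([p+q]) which is standard in (p,q)-annular sense and whose partition into orbits equals π belongs to S_ann-nc(p,q); consequently, there are exactly card(B₀')·card(B₀'') permutations τ ∈ S_ann-nc(p,q) whose partition into orbits equals π. -/

import Mathlib

/-- The permutation induced by `f` on the subset `B`: an element `b` is sent to the first
element of the sequence `f b, f (f b), f (f (f b)), ...` that lies in `B`
(and is left fixed if no iterate ever returns to `B`). -/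
noncomputable def induced {α : Type*} (f : α → α) (B : Set α) (b : α) : α := by
  classical
  exact if h : ∃ k, 0 < k ∧ f^[k] b ∈ B then f^[Nat.find h] b else b

/-- `A` is an orbit of the permutation `τ`. -/
def IsOrbit {α : Type*} (τ : Equiv.Perm α) (A : Set α) : Prop :=
  ∃ a, A = {b | τ.SameCycle a b}

/-- The number of orbits of `τ` (fixed points count as orbits). -/
noncomputable def numOrbits {α : Type*} (τ : Equiv.Perm α) : ℕ :=
  Set.ncard {A : Set α | IsOrbit τ A}

/-- `induced f S` acts on `a, b, c` as the 3-cycle `(a, b, c)`. -/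
def MapsCyc3 {α : Type*} (f : α → α) (S : Set α) (a b c : α) : Prop :=
  induced f S a = b ∧ induced f S b = c ∧ induced f S c = a

/-- `induced f S` acts on `a, b, c, d` as the 4-cycle `(a, b, c, d)`. -/
def MapsCyc4 {α : Type*} (f : α → α) (S : Set α) (a b c d : α) : Prop :=
  induced f S a = b ∧ induced f S b = c ∧ induced f S c = d ∧ induced f S d = a

/-- `induced f S` acts on `a, b, c, d` as the product of transpositions `(a, c)(b, d)`. -/
def MapsSwap2 {α : Type*} (f : α → α) (S : Set α) (a b c d : α) : Prop :=
  induced f S a = c ∧ induced f S c = a ∧ induced f S b = d ∧ induced f S d = b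

/-- `induced f S` acts on `x, y` as the transposition `(x, y)`. -/
def MapsSwap {α : Type*} (f : α → α) (S : Set α) (x y : α) : Prop :=
  induced f S x = y ∧ induced f S y = x

/-- `σ` is standard with respect to the "forward cycle" `γ₀`, i.e. `σ∣B = γ₀∣B` for
every orbit `B` of `σ`. -/
def DiscStandardRel {n : ℕ} (γ₀ σ : Equiv.Perm (Fin n)) : Prop :=
  ∀ A : Set (Fin n), IsOrbit σ A → ∀ b ∈ A, induced (⇑σ) A b = induced (⇑γ₀) A b

/-- The orbit partition of `σ` has no crossing: there are no `a < b < c < d` with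
`a, c` in one orbit and `b, d` in a different orbit. -/
def OrbitsNoCrossing {n : ℕ} (σ : Equiv.Perm (Fin n)) : Prop :=
  ¬ ∃ a b c d : Fin n, a < b ∧ b < c ∧ c < d ∧
      σ.SameCycle a c ∧ σ.SameCycle b d ∧ ¬ σ.SameCycle a b

/-- Disc non-crossing relative to a given forward cycle `γ₀`. -/
def DiscNCRel {n : ℕ} (γ₀ σ : Equiv.Perm (Fin n)) : Prop :=
  DiscStandardRel γ₀ σ ∧ OrbitsNoCrossing σ

/-- The set `S_disc-nc(n)` of disc non-crossing permutations of `[n]`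
(here `[n] = {1, …, n}` is modelled by `Fin n`, and the forward cycle
`γ₀ = (1, 2, …, n)` is `finRotate n`). -/
def DiscNC {n : ℕ} (σ : Equiv.Perm (Fin n)) : Prop :=
  DiscNCRel (finRotate n) σ

/-- The external points `{1, …, p}` (0-indexed: values `< p`). -/
def extSet (p q : ℕ) : Set (Fin (p + q)) := {i | (i : ℕ) < p}

/-- The internal points `{p+1, …, p+q}` (0-indexed: values `≥ p`). -/
def intSet (p q : ℕ) : Set (Fin (p + q)) := {i | p ≤ (i : ℕ)}

/-- `γ_ext = (1, 2, …, p)`, the forward cycle on the external points. -/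
def gammaExt (p q : ℕ) : Equiv.Perm (Fin (p + q)) :=
  ((List.finRange (p + q)).take p).formPerm

/-- `γ_int = (p+1, p+2, …, p+q)`, the forward cycle on the internal points. -/
def gammaInt (p q : ℕ) : Equiv.Perm (Fin (p + q)) :=
  ((List.finRange (p + q)).drop p).formPerm

/-- `γ = γ_ext · γ_int`. -/
def gammaAnn (p q : ℕ) : Equiv.Perm (Fin (p + q)) := gammaExt p q * gammaInt p q

/-- `λ_{x,y}`: the permutation fixing `x` and `y` and cycling the remaining points as
`(γ_ext(x), γ_ext²(x), …, γ_ext^{p-1}(x), γ_int(y), γ_int²(y), …, γ_int^{q-1}(y))`. -/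
def lamPerm (p q : ℕ) (x y : Fin (p + q)) : Equiv.Perm (Fin (p + q)) :=
  (((List.range (p - 1)).map fun k => (gammaExt p q ^ (k + 1)) x) ++
    ((List.range (q - 1)).map fun k => (gammaInt p q ^ (k + 1)) y)).formPerm

/-- `τ` is standard in `(p,q)`-annular sense. -/
def AnnStandard (p q : ℕ) (τ : Equiv.Perm (Fin (p + q))) : Prop :=
  (∀ A : Set (Fin (p + q)), IsOrbit τ A →
    (∀ b ∈ A ∩ extSet p q,
        induced (⇑τ) (A ∩ extSet p q) b = induced (⇑(gammaExt p q)) (A ∩ extSet p q) b) ∧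
    (∀ b ∈ A ∩ intSet p q,
        induced (⇑τ) (A ∩ intSet p q) b = induced (⇑(gammaInt p q)) (A ∩ intSet p q) b)) ∧
  (∀ A : Set (Fin (p + q)), IsOrbit τ A →
    (A ∩ extSet p q).Nonempty → (A ∩ intSet p q).Nonempty →
    (∃! a, a ∈ A ∩ extSet p q ∧ τ a ∈ intSet p q) ∧
    (∃! a, a ∈ A ∩ intSet p q ∧ τ a ∈ extSet p q))

/-- The annular crossing pattern (AC-1). -/
def AC1 (p q : ℕ) (τ : Equiv.Perm (Fin (p + q))) : Prop :=
  ∃ a b c d : Fin (p + q), List.Pairwise (· ≠ ·) [a, b, c, d] ∧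
    MapsCyc4 (⇑(gammaAnn p q)) {a, b, c, d} a b c d ∧
    MapsSwap2 (⇑τ) {a, b, c, d} a b c d

/-- The annular crossing pattern (AC-2). -/
def AC2 (p q : ℕ) (τ : Equiv.Perm (Fin (p + q))) : Prop :=
  ∃ a b c x y : Fin (p + q), List.Pairwise (· ≠ ·) [a, b, c, x, y] ∧
    x ∈ extSet p q ∧ y ∈ intSet p q ∧
    MapsCyc3 (⇑(lamPerm p q x y)) {a, b, c} a b c ∧
    MapsCyc3 (⇑τ) {a, b, c, x, y} a c b ∧
    MapsSwap (⇑τ) {a, b, c, x, y} x y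

/-- The annular crossing pattern (AC-3). -/
def AC3 (p q : ℕ) (τ : Equiv.Perm (Fin (p + q))) : Prop :=
  ∃ a b c d x y : Fin (p + q), List.Pairwise (· ≠ ·) [a, b, c, d, x, y] ∧
    x ∈ extSet p q ∧ y ∈ intSet p q ∧
    MapsCyc4 (⇑(lamPerm p q x y)) {a, b, c, d} a b c d ∧
    MapsSwap2 (⇑τ) {a, b, c, d, x, y} a b c d ∧
    MapsSwap (⇑τ) {a, b, c, d, x, y} x y

/-- The set `S_ann-nc(p,q)` of `(p,q)`-annular non-crossing permutations. -/
def AnnNC (p q : ℕ) (τ : Equiv.Perm (Fin (p + q))) : Prop :=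
  AnnStandard p q τ ∧ ¬ AC1 p q τ ∧ ¬ AC2 p q τ ∧ ¬ AC3 p q τ

/-- A `(p,q)`-connecting set: meets both the external and internal points. -/
def ConnectingBlock (p q : ℕ) (B : Set (Fin (p + q))) : Prop :=
  (B ∩ extSet p q).Nonempty ∧ (B ∩ intSet p q).Nonempty

/-- `τ` is `(p,q)`-connected: it has a `(p,q)`-connecting orbit. -/
def AnnConnected (p q : ℕ) (τ : Equiv.Perm (Fin (p + q))) : Prop :=
  ∃ A : Set (Fin (p + q)), IsOrbit τ A ∧ ConnectingBlock p q A

/-- A family of blocks has no crossing: no `a < b < c < d` with `a, c` in one block and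
`b, d` in a different block. -/
def NoCrossing {n : ℕ} (ρ : Set (Set (Fin n))) : Prop :=
  ¬ ∃ (a b c d : Fin n) (B C : Set (Fin n)), B ∈ ρ ∧ C ∈ ρ ∧ B ≠ C ∧
      a < b ∧ b < c ∧ c < d ∧ a ∈ B ∧ c ∈ B ∧ b ∈ C ∧ d ∈ C

section Generic
variable {α : Type*}

/-- First-return description of `induced`. -/
theorem induced_spec (f : α → α) (C : Set α) (b : α) (h : ∃ k, 0 < k ∧ f^[k] b ∈ C) :
    ∃ k, 0 < k ∧ f^[k] b ∈ C ∧ (∀ j, 0 < j → j < k → f^[j] b ∉ C) ∧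
      induced f C b = f^[k] b := by
  classical
  refine ⟨Nat.find h, (Nat.find_spec h).1, (Nat.find_spec h).2, ?_, ?_⟩
  · intro j hj hjk hm
    exact Nat.find_min h hjk ⟨hj, hm⟩
  · unfold induced
    rw [dif_pos h]

theorem induced_eq (f : α → α) (C : Set α) (b : α) (k : ℕ) (hk : 0 < k) (hm : f^[k] b ∈ C)
    (hmin : ∀ j, 0 < j → j < k → f^[j] b ∉ C) : induced f C b = f^[k] b := by
  obtain ⟨l, hl, hlm, hlmin, he⟩ := induced_spec f C b ⟨k, hk, hm⟩
  rcases lt_trichotomy k l with h | h | h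
  · exact absurd hm (hlmin k hk h)
  · rw [he, h]
  · exact absurd hlm (hmin l hl h)

theorem induced_one (f : α → α) (C : Set α) (b : α) (hm : f b ∈ C) : induced f C b = f b :=
  induced_eq f C b 1 one_pos hm (fun j h1 h2 => by omega)

theorem perm_return [Finite α] (τ : Equiv.Perm α) (b : α) : ∃ k, 0 < k ∧ (⇑τ)^[k] b = b := by
  refine ⟨orderOf τ, orderOf_pos τ, ?_⟩
  rw [← Equiv.Perm.coe_pow, pow_orderOf_eq_one]; rfl

theorem perm_return' [Finite α] (τ : Equiv.Perm α) (C : Set α) (b : α) (hb : b ∈ C) :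
    ∃ k, 0 < k ∧ (⇑τ)^[k] b ∈ C := by
  obtain ⟨k, hk, h⟩ := perm_return τ b
  exact ⟨k, hk, by rwa [h]⟩

theorem induced_mem [Finite α] (τ : Equiv.Perm α) (C : Set α) (b : α) (hb : b ∈ C) :
    induced τ C b ∈ C := by
  obtain ⟨k, _, h, _, he⟩ := induced_spec τ C b (perm_return' τ C b hb)
  rwa [he]

theorem induced_same [Finite α] (τ : Equiv.Perm α) (C : Set α) (b : α) (hb : b ∈ C) :
    τ.SameCycle b (induced τ C b) := by
  obtain ⟨k, _, h, _, he⟩ := induced_spec τ C b (perm_return' τ C b hb)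
  rw [he, ← Equiv.Perm.coe_pow]
  exact ⟨k, by simp⟩

/-- The step before the first return. -/
theorem induced_pred [Finite α] (τ : Equiv.Perm α) (C : Set α) (b : α) (hb : b ∈ C)
    (hn : τ b ∉ C) : ∃ w, w ∉ C ∧ τ.SameCycle b w ∧ τ w ∈ C ∧ induced τ C b = τ w := by
  obtain ⟨k, hk, h, hmin, he⟩ := induced_spec τ C b (perm_return' τ C b hb)
  obtain ⟨k, rfl⟩ : ∃ j, k = j + 1 := ⟨k - 1, by omega⟩
  rw [Function.iterate_succ_apply'] at h he
  have hk0 : 0 < k := by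
    rcases Nat.eq_zero_or_pos k with rfl | h'
    · exact absurd h hn
    · exact h'
  refine ⟨(⇑τ)^[k] b, hmin k hk0 (by omega), ?_, h, he⟩
  rw [← Equiv.Perm.coe_pow]
  exact ⟨k, by simp⟩

/-- Iterates of `f` which lie in `C` are iterates of the induced map. -/
theorem induced_reach (f : α → α) (C : Set α) :
    ∀ (n : ℕ) (b : α), f^[n] b ∈ C → ∃ m, (induced f C)^[m] b = f^[n] b ∧
      ∀ l, 0 < l → l ≤ m → (induced f C)^[l] b ∈ C := by
  intro n
  induction n using Nat.strong_induction_on with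
  | _ n ih =>
    intro b hm
    rcases Nat.eq_zero_or_pos n with rfl | hn
    · exact ⟨0, rfl, fun l h1 h2 => by omega⟩
    · obtain ⟨k, hk, h, hmin, he⟩ := induced_spec f C b ⟨n, hn, hm⟩
      have hkn : k ≤ n := by
        by_contra hc
        exact hmin n hn (by omega) hm
      have h2 : f^[n - k] (f^[k] b) = f^[n] b := by
        rw [← Function.iterate_add_apply]; congr 2; omega
      obtain ⟨m, h3, h4⟩ := ih (n - k) (by omega) (f^[k] b) (by rwa [h2])
      refine ⟨m + 1, ?_, ?_⟩
      · rw [Function.iterate_succ_apply, he, h3, h2]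
      · intro l h5 h6
        obtain ⟨l, rfl⟩ : ∃ j, l = j + 1 := ⟨l - 1, by omega⟩
        rw [Function.iterate_succ_apply, he]
        rcases Nat.eq_zero_or_pos l with rfl | h7
        · exact h
        · exact h4 l h7 (by omega)

theorem induced_iter_as (τ : α → α) (C : Set α) (hC : ∀ b ∈ C, ∃ k, 0 < k ∧ τ^[k] b ∈ C) :
    ∀ (m : ℕ) (b : α), b ∈ C → (induced τ C)^[m] b ∈ C := by
  intro m
  induction m with
  | zero => intro b hb; exact hb
  | succ m ih =>
    intro b hb
    rw [Function.iterate_succ_apply]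
    apply ih
    obtain ⟨k, _, h, _, he⟩ := induced_spec τ C b (hC b hb)
    rwa [he]

/-- Composition of inductions. -/
theorem induced_induced (f : α → α) (C T : Set α) (hT : T ⊆ C) (b : α)
    (hex : ∃ k, 0 < k ∧ f^[k] b ∈ T) :
    induced (induced f C) T b = induced f T b := by
  obtain ⟨n, hn, hm, hmin, he⟩ := induced_spec f T b hex
  clear hex
  rw [he]
  clear he
  induction n using Nat.strong_induction_on generalizing b with
  | _ n ih =>
    obtain ⟨k, hk, h, hkmin, he⟩ := induced_spec f C b ⟨n, hn, hT hm⟩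
    have hkn : k ≤ n := by
      by_contra hc
      exact hkmin n hn (by omega) (hT hm)
    rcases hkn.eq_or_lt with rfl | hlt
    · rw [induced_one _ _ _ (by rwa [he]), he]
    · have h2 : ∀ j, f^[j] (f^[k] b) = f^[j + k] b := fun j => by
        rw [← Function.iterate_add_apply]
      have h3 := ih (n - k) (by omega) (f^[k] b) (by omega)
        (by rw [h2]; rwa [Nat.sub_add_cancel hkn])
        (fun j h4 h5 => by rw [h2]; exact hmin _ (by omega) (by omega))
      rw [h2, Nat.sub_add_cancel hkn] at h3
      rw [← h3]
      -- the first step of the induced map is not in `T`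
      have hnot : induced f C b ∉ T := by rw [he]; exact hmin k hk hlt
      have hex2 : ∃ k', 0 < k' ∧ (induced f C)^[k'] (f^[k] b) ∈ T := by
        obtain ⟨m, hm1, _⟩ := induced_reach f C (n - k) (f^[k] b)
          (by rw [h2, Nat.sub_add_cancel hkn]; exact hT hm)
        rw [h2, Nat.sub_add_cancel hkn] at hm1
        refine ⟨m, ?_, by rwa [hm1]⟩
        rcases Nat.eq_zero_or_pos m with rfl | h7
        · exact absurd (hm1 ▸ hm : f^[k] b ∈ T) (he ▸ hnot)
        · exact h7
      obtain ⟨l, hl, hlm, hlmin, hle⟩ := induced_spec _ _ _ hex2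
      rw [hle]
      rw [induced_eq (induced f C) T b (l + 1) (by omega)]
      · rw [Function.iterate_succ_apply, he]
      · rwa [Function.iterate_succ_apply, he]
      · intro j hj1 hj2
        obtain ⟨j, rfl⟩ : ∃ i, j = i + 1 := ⟨j - 1, by omega⟩
        rw [Function.iterate_succ_apply]
        rcases Nat.eq_zero_or_pos j with rfl | h7
        · exact hnot
        · rw [he]; exact hlmin j h7 (by omega)

theorem induced_sub [Finite α] (τ : Equiv.Perm α) (C T : Set α) (hT : T ⊆ C) (b : α)
    (hb : b ∈ T) : induced (induced τ C) T b = induced τ T b :=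
  induced_induced τ C T hT b (perm_return' τ T b hb)

/-- If `f` and `g` agree on a set stable under `f`, the induced maps agree. -/
theorem induced_congr (f g : α → α) (C T : Set α) (hC : ∀ b ∈ C, f b ∈ C)
    (hfg : ∀ b ∈ C, f b = g b) (b : α) (hb : b ∈ C) : induced f T b = induced g T b := by
  have h : ∀ n, f^[n] b ∈ C ∧ f^[n] b = g^[n] b := by
    intro n
    induction n with
    | zero => exact ⟨hb, rfl⟩
    | succ n ih =>
      rw [Function.iterate_succ_apply', Function.iterate_succ_apply', ← ih.2]
      exact ⟨hC _ ih.1, hfg _ ih.1⟩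
  have h' : ∀ n, f^[n] b = g^[n] b := fun n => (h n).2
  by_cases hex : ∃ k, 0 < k ∧ f^[k] b ∈ T
  · obtain ⟨k, hk, hm, hmin, he⟩ := induced_spec f T b hex
    rw [he, induced_eq g T b k hk (by rwa [← h']) (fun j h1 h2 => by
      rw [← h']; exact hmin j h1 h2), h']
  · have hex' : ¬ ∃ k, 0 < k ∧ g^[k] b ∈ T := by
      intro ⟨k, hk, hm⟩
      exact hex ⟨k, hk, by rwa [h']⟩
    unfold induced
    rw [dif_neg hex, dif_neg hex']

theorem same_iter [Finite α] (τ : Equiv.Perm α) {a b : α} (h : τ.SameCycle a b) :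
    ∃ n : ℕ, (⇑τ)^[n] a = b := by
  obtain ⟨n, hn⟩ := h.exists_nat_pow_eq
  exact ⟨n, by rw [← Equiv.Perm.coe_pow]; exact hn⟩

theorem same_of_iter (τ : Equiv.Perm α) {a b : α} (n : ℕ) (h : (⇑τ)^[n] a = b) :
    τ.SameCycle a b := by
  rw [← Equiv.Perm.coe_pow] at h
  exact ⟨n, by simpa using h⟩

/-- The induced map sends `a → c → a`: then the orbit of `a` meets `S` only in `a, c`. -/
theorem swap_orbit [Finite α] (τ : Equiv.Perm α) (S : Set α) (a c z : α)
    (h1 : induced τ S a = c) (h2 : induced τ S c = a) (hz : z ∈ S) (h : τ.SameCycle a z) :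
    z = a ∨ z = c := by
  obtain ⟨n, hn⟩ := same_iter τ h
  obtain ⟨m, hm, _⟩ := induced_reach τ S n a (by rwa [hn])
  rw [hn] at hm
  have : ∀ m, (induced τ S)^[m] a = a ∨ (induced τ S)^[m] a = c := by
    intro m
    induction m with
    | zero => left; rfl
    | succ m ih =>
      rw [Function.iterate_succ_apply']
      rcases ih with h | h <;> rw [h]
      · right; exact h1
      · left; exact h2
  rw [← hm]; exact this m

theorem induced_pair [Finite α] (τ : Equiv.Perm α) (S : Set α) (a c : α) (ha : a ∈ S) (hc : c ∈ S)
    (hne : a ≠ c) (hsame : τ.SameCycle a c)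
    (hS : ∀ z ∈ S, τ.SameCycle a z → z = a ∨ z = c) : induced τ S a = c := by
  rcases hS _ (induced_mem τ S a ha) (induced_same τ S a ha) with h | h
  · rcases swap_orbit τ S a a c h h hc hsame with h' | h' <;> exact absurd h'.symm hne
  · exact h

theorem mapsSwap2_iff [Finite α] (τ : Equiv.Perm α) (a b c d : α)
    (hd : List.Pairwise (· ≠ ·) [a, b, c, d]) :
    MapsSwap2 τ {a, b, c, d} a b c d ↔
      τ.SameCycle a c ∧ τ.SameCycle b d ∧ ¬ τ.SameCycle a b := by
  simp only [List.pairwise_cons, List.mem_cons, List.not_mem_nil] at hd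
  have hab : a ≠ b := hd.1 b (by simp)
  have hac : a ≠ c := hd.1 c (by simp)
  have hcb : b ≠ c := hd.2.1 c (by simp)
  have hbd : b ≠ d := hd.2.1 d (by simp)
  constructor
  · rintro ⟨h1, h2, h3, h4⟩
    refine ⟨?_, ?_, ?_⟩
    · have := induced_same τ {a, b, c, d} a (by simp); rwa [h1] at this
    · have := induced_same τ {a, b, c, d} b (by simp); rwa [h3] at this
    · intro h
      rcases swap_orbit τ _ a c b h1 h2 (by simp) h with h | h
      · exact hab h.symm
      · exact hcb h
  · rintro ⟨h1, h2, h3⟩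
    have key1 : ∀ z ∈ ({a, b, c, d} : Set α), τ.SameCycle a z → z = a ∨ z = c := by
      intro z hz h
      simp only [Set.mem_insert_iff, Set.mem_singleton_iff] at hz
      rcases hz with rfl | rfl | rfl | rfl
      · left; rfl
      · exact absurd h h3
      · right; rfl
      · exact absurd (h.trans h2.symm) h3
    have key2 : ∀ z ∈ ({a, b, c, d} : Set α), τ.SameCycle b z → z = b ∨ z = d := by
      intro z hz h
      simp only [Set.mem_insert_iff, Set.mem_singleton_iff] at hz
      rcases hz with rfl | rfl | rfl | rfl
      · exact absurd h.symm h3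
      · left; rfl
      · exact absurd (h1.trans h.symm) h3
      · right; rfl
    refine ⟨induced_pair τ _ a c (by simp) (by simp) hac h1 key1,
      induced_pair τ _ c a (by simp) (by simp) hac.symm h1.symm ?_,
      induced_pair τ _ b d (by simp) (by simp) hbd h2 key2,
      induced_pair τ _ d b (by simp) (by simp) hbd.symm h2.symm ?_⟩
    · intro z hz h; exact (key1 z hz (h1.trans h)).symm
    · intro z hz h; exact (key2 z hz (h2.trans h)).symm

/-- `lam` induces on `S \ {x}` the same map as `g`. -/
theorem lam_induced [Finite α] (lam g : Equiv.Perm α) (S : Set α) (x : α) (hx : x ∈ S)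
    (hg : ∀ a, g a ∈ S ↔ a ∈ S) (hlx : lam x = x)
    (hF1 : ∀ a ∈ S, a ≠ x → g a ≠ x → lam a = g a)
    (hF : ∀ w, lam w ∈ S → lam w = x ∨ lam w = g x ∨ lam w = g w)
    (T : Set α) (hT : T ⊆ S \ {x}) (a : α) (ha : a ∈ T) : induced lam T a = induced g T a := by
  have key : ∀ b ∈ S \ {x}, induced lam (S \ {x}) b = induced g (S \ {x}) b := by
    rintro b ⟨hb, hbx⟩
    have hbx : b ≠ x := hbx
    by_cases h : g b = x
    · have hgx : g x ≠ x := fun h' => hbx (g.injective (h.trans h'.symm))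
      have hmem : g x ∈ S \ {x} := ⟨(hg x).2 hx, hgx⟩
      have h1 : induced g (S \ {x}) b = g x := by
        rw [induced_eq g (S \ {x}) b 2 (by omega)]
        · simp [h]
        · simpa [h] using hmem
        · intro j hj1 hj2
          obtain rfl : j = 1 := by omega
          simp [h]
      rw [h1]
      by_cases hl : lam b ∈ S \ {x}
      · rw [induced_one _ _ _ hl]
        rcases hF b hl.1 with h2 | h2 | h2
        · exact absurd h2 hl.2
        · exact h2
        · exact absurd (h2.trans h) hl.2
      · obtain ⟨w, hw, _, hlw, he⟩ := induced_pred lam (S \ {x}) b ⟨hb, hbx⟩ hl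
        rw [he]
        rcases hF w hlw.1 with h2 | h2 | h2
        · exact absurd h2 hlw.2
        · exact h2
        · exfalso
          apply hw
          refine ⟨(hg w).1 (h2 ▸ hlw.1), ?_⟩
          rintro rfl
          exact hlw.2 hlx
    · have h1 := hF1 b hb hbx h
      have h2 : g b ∈ S \ {x} := ⟨(hg b).2 hb, h⟩
      rw [induced_one _ _ _ h2, induced_one _ _ _ (show lam b ∈ S \ {x} by rwa [h1]), h1]
  rw [← induced_sub lam (S \ {x}) T hT a ha, ← induced_sub g (S \ {x}) T hT a ha]
  exact induced_congr _ _ (S \ {x}) T (fun b hb => induced_mem lam _ b hb) key a (hT ha)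

/-- Uniqueness of the passage from `S` to its complement. -/
theorem no_double_pass [Finite α] (lam : Equiv.Perm α) (S T : Set α)
    (he : ∀ e e', e ∈ S → lam e ∉ S → e' ∈ S → lam e' ∉ S → e = e')
    (a b c d : α) (ha : a ∈ T) (hc : c ∈ T) (haS : a ∈ S) (hcS : c ∈ S) (hbS : b ∉ S)
    (hdS : d ∉ S) (hac : a ≠ c) (h1 : induced lam T a = b) (h2 : induced lam T c = d) : False := by
  have cross : ∀ (k : ℕ) (z : α), z ∈ S → (⇑lam)^[k] z ∉ S →
      ∃ j < k, (⇑lam)^[j] z ∈ S ∧ lam ((⇑lam)^[j] z) ∉ S := by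
    intro k
    induction k with
    | zero => intro z hz h; exact absurd hz h
    | succ k ih =>
      intro z hz h
      by_cases hk : (⇑lam)^[k] z ∈ S
      · exact ⟨k, by omega, hk, by rwa [Function.iterate_succ_apply'] at h⟩
      · obtain ⟨j, hj, h'⟩ := ih z hz hk
        exact ⟨j, by omega, h'⟩
  obtain ⟨k, hk, _, hkmin, hke⟩ := induced_spec lam T a (perm_return' lam T a ha)
  obtain ⟨k', hk', _, hkmin', hke'⟩ := induced_spec lam T c (perm_return' lam T c hc)
  obtain ⟨j, hj, hj1, hj2⟩ := cross k a haS (by rw [← hke, h1]; exact hbS)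
  obtain ⟨j', hj', hj1', hj2'⟩ := cross k' c hcS (by rw [← hke', h2]; exact hdS)
  have heq := he _ _ hj1 hj2 hj1' hj2'
  have inj : ∀ n, Function.Injective ((⇑lam)^[n]) := fun n => lam.injective.iterate n
  rcases lt_trichotomy j j' with h | h | h
  · have : a = (⇑lam)^[j' - j] c := by
      apply inj j
      rw [← Function.iterate_add_apply, heq]; congr 2; omega
    exact hkmin' (j' - j) (by omega) (by omega) (this ▸ ha)
  · subst h; exact hac (inj j heq)
  · have : c = (⇑lam)^[j - j'] a := by
      apply inj j'
      rw [← Function.iterate_add_apply, ← heq]; congr 2; omega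
    exact hkmin (j - j') (by omega) (by omega) (this ▸ hc)

end Generic

section LamList
set_option linter.unusedSectionVars false
variable {α : Type*} [DecidableEq α]

/-- The list whose `formPerm` is `λ_{x,y}`. -/
def lamList (f g : Equiv.Perm α) (m n : ℕ) (x y : α) : List α :=
  ((List.range m).map fun k => (f ^ (k + 1)) x) ++ ((List.range n).map fun k => (g ^ (k + 1)) y)

theorem half_nodup (f : Equiv.Perm α) (S : Finset α) (hf : f.IsCycleOn S) (x : α) (hx : x ∈ S) :
    ((List.range (S.card - 1)).map fun k => (f ^ (k + 1)) x).Nodup := by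
  refine List.Nodup.map_on ?_ List.nodup_range
  intro i hi j hj h
  simp only [List.mem_range] at hi hj
  have := (hf.pow_apply_eq_pow_apply hx).1 h
  have h2 : (i + 1) % S.card = (j + 1) % S.card := this
  rw [Nat.mod_eq_of_lt (by omega), Nat.mod_eq_of_lt (by omega)] at h2
  omega

theorem half_mem (f : Equiv.Perm α) (S : Finset α) (hf : f.IsCycleOn S) (x : α) (hx : x ∈ S)
    (z : α) (hz : z ∈ (List.range (S.card - 1)).map fun k => (f ^ (k + 1)) x) :
    z ∈ S ∧ z ≠ x := by
  simp only [List.mem_map, List.mem_range] at hz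
  obtain ⟨k, hk, rfl⟩ := hz
  refine ⟨?_, ?_⟩
  · exact_mod_cast (hf.1.perm_pow (k + 1)).mapsTo hx
  · intro h
    have := (hf.pow_apply_eq hx).1 h
    have := Nat.le_of_dvd (by omega) this
    omega

theorem lamList_nodup (f g : Equiv.Perm α) (S S' : Finset α) (hf : f.IsCycleOn S)
    (hg : g.IsCycleOn S') (hdis : Disjoint S S') (x y : α) (hx : x ∈ S) (hy : y ∈ S') :
    (lamList f g (S.card - 1) (S'.card - 1) x y).Nodup := by
  refine List.Nodup.append (half_nodup f S hf x hx) (half_nodup g S' hg y hy) ?_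
  intro z h1 h2
  exact Finset.disjoint_left.1 hdis (half_mem f S hf x hx z h1).1 (half_mem g S' hg y hy z h2).1

theorem lamList_fix (f g : Equiv.Perm α) (S S' : Finset α) (hf : f.IsCycleOn S)
    (hg : g.IsCycleOn S') (hdis : Disjoint S S') (x y : α) (hx : x ∈ S) (hy : y ∈ S') :
    (lamList f g (S.card - 1) (S'.card - 1) x y).formPerm x = x := by
  apply List.formPerm_apply_of_notMem
  intro h
  rcases List.mem_append.1 h with h | h
  · exact (half_mem f S hf x hx x h).2 rfl
  · exact Finset.disjoint_left.1 hdis hx (half_mem g S' hg y hy x h).1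

theorem lamList_core (f g : Equiv.Perm α) (S S' : Finset α) (hf : f.IsCycleOn S)
    (hg : g.IsCycleOn S') (hdis : Disjoint S S') (x y : α) (hx : x ∈ S) (hy : y ∈ S')
    (z : α) (hz : f z ∈ S) (h1 : f z ≠ x) (h2 : f z ≠ f x) :
    (lamList f g (S.card - 1) (S'.card - 1) x y).formPerm z = f z := by
  obtain ⟨n, hn, he⟩ := hf.exists_pow_eq hx hz
  have hn0 : n ≠ 0 := by rintro rfl; exact h1 (by simpa using he.symm)
  have hn1 : n ≠ 1 := by rintro rfl; exact h2 (by simpa using he.symm)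
  obtain ⟨j, rfl⟩ : ∃ j, n = j + 2 := ⟨n - 2, by omega⟩
  have hzz : z = (f ^ (j + 1)) x := by
    apply f.injective
    rw [← he, pow_succ' f (j + 1)]; rfl
  have hlen : (lamList f g (S.card - 1) (S'.card - 1) x y).length
      = (S.card - 1) + (S'.card - 1) := by simp [lamList]
  have hg1 : ∀ i (h : i < (lamList f g (S.card - 1) (S'.card - 1) x y).length),
      i < S.card - 1 →
      (lamList f g (S.card - 1) (S'.card - 1) x y)[i] = (f ^ (i + 1)) x := by
    intro i h h'
    simp only [lamList]
    rw [List.getElem_append_left (by simpa using h')]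
    simp
  have := List.formPerm_apply_lt_getElem _ (lamList_nodup f g S S' hf hg hdis x y hx hy) j
    (by rw [hlen]; omega)
  rw [hg1 j _ (by omega), hg1 (j + 1) _ (by omega)] at this
  rw [hzz, this, ← hzz, ← he]

theorem lamList_symm (f g : Equiv.Perm α) (S S' : Finset α) (hf : f.IsCycleOn S)
    (hg : g.IsCycleOn S') (hdis : Disjoint S S') (x y : α) (hx : x ∈ S) (hy : y ∈ S') :
    (lamList f g (S.card - 1) (S'.card - 1) x y).formPerm =
      (lamList g f (S'.card - 1) (S.card - 1) y x).formPerm := by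
  apply List.formPerm_eq_of_isRotated (lamList_nodup f g S S' hf hg hdis x y hx hy)
  exact List.isRotated_append

theorem lamList_induced [Finite α] (f g : Equiv.Perm α) (S S' : Finset α) (hf : f.IsCycleOn S)
    (hg : g.IsCycleOn S') (hdis : Disjoint S S') (x y : α) (hx : x ∈ S) (hy : y ∈ S')
    (T : Set α) (hT : T ⊆ (S : Set α) \ {x}) (a : α) (ha : a ∈ T) :
    induced (lamList f g (S.card - 1) (S'.card - 1) x y).formPerm T a = induced f T a := by
  have hfix := lamList_fix f g S S' hf hg hdis x y hx hy
  have core := lamList_core f g S S' hf hg hdis x y hx hy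
  have hS : ∀ a, f a ∈ S ↔ a ∈ S := fun a => by
    have := hf.apply_mem_iff (x := a)
    exact_mod_cast this
  refine lam_induced _ f S x (by exact_mod_cast hx) (by exact_mod_cast hS) hfix ?_ ?_ T hT a ha
  · intro b hb hbx hfb
    exact core b ((hS b).2 hb) hfb (fun h => hbx (f.injective h))
  · intro w hw
    by_cases h1 : (lamList f g (S.card - 1) (S'.card - 1) x y).formPerm w = x
    · exact Or.inl h1
    by_cases h2 : (lamList f g (S.card - 1) (S'.card - 1) x y).formPerm w = f x
    · exact Or.inr (Or.inl h2)
    right; right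
    set l := (lamList f g (S.card - 1) (S'.card - 1) x y).formPerm with hl
    have h3 := core (f.symm (l w)) (by simpa using hw) (by simpa using h1) (by simpa using h2)
    rw [Equiv.apply_symm_apply] at h3
    have h4 := l.injective h3
    apply f.symm.injective
    rw [h4]; simp

theorem lamList_cross (f g : Equiv.Perm α) (S S' : Finset α) (hf : f.IsCycleOn S)
    (hg : g.IsCycleOn S') (hdis : Disjoint S S') (x y : α) (hx : x ∈ S) (hy : y ∈ S')
    (e : α) (he : e ∈ S) (hl : (lamList f g (S.card - 1) (S'.card - 1) x y).formPerm e ∉ S) :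
    f e = x := by
  have hS : ∀ a, f a ∈ S ↔ a ∈ S := fun a => by
    have := hf.apply_mem_iff (x := a)
    exact_mod_cast this
  by_contra h
  by_cases hex : e = x
  · subst hex
    rw [lamList_fix f g S S' hf hg hdis e y hx hy] at hl
    exact hl he
  · rw [lamList_core f g S S' hf hg hdis x y hx hy e ((hS e).2 he) h
      (fun h => hex (f.injective h))] at hl
    exact hl ((hS e).2 he)

end LamList

section Annular
variable {p q : ℕ}

theorem mem_int_iff (i : Fin (p + q)) : i ∈ intSet p q ↔ i ∉ extSet p q := by
  simp [intSet, extSet]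

theorem ext_cycle (p q : ℕ) : ∃ S : Finset (Fin (p + q)), (S : Set (Fin (p + q))) = extSet p q ∧
    S.card = p ∧ (gammaExt p q).IsCycleOn S := by
  have hnd : ((List.finRange (p + q)).take p).Nodup :=
    (List.nodup_finRange (p + q)).sublist (List.take_sublist _ _)
  refine ⟨((List.finRange (p + q)).take p).toFinset, ?_, ?_, ?_⟩
  · ext i
    simp only [List.coe_toFinset, Set.mem_ofPred_eq, extSet, List.mem_take_iff_getElem]
    constructor
    · rintro ⟨j, hj, rfl⟩
      simp at hj ⊢
      omega
    · intro h
      exact ⟨i, by simp; omega, by simp⟩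
  · rw [List.toFinset_card_of_nodup hnd]; simp
  · rw [List.coe_toFinset]; exact hnd.isCycleOn_formPerm

theorem int_cycle (p q : ℕ) : ∃ S : Finset (Fin (p + q)), (S : Set (Fin (p + q))) = intSet p q ∧
    S.card = q ∧ (gammaInt p q).IsCycleOn S := by
  have hnd : ((List.finRange (p + q)).drop p).Nodup :=
    (List.nodup_finRange (p + q)).sublist (List.drop_sublist _ _)
  refine ⟨((List.finRange (p + q)).drop p).toFinset, ?_, ?_, ?_⟩
  · ext i
    simp only [List.coe_toFinset, Set.mem_ofPred_eq, intSet, List.mem_drop_iff_getElem]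
    constructor
    · rintro ⟨j, hj, rfl⟩
      simp
    · intro h
      exact ⟨i - p, by simp; omega, by ext; simp; omega⟩
  · rw [List.toFinset_card_of_nodup hnd]; simp
  · rw [List.coe_toFinset]; exact hnd.isCycleOn_formPerm

theorem ext_int_disj {S S' : Finset (Fin (p + q))} (h : (S : Set (Fin (p + q))) = extSet p q)
    (h' : (S' : Set (Fin (p + q))) = intSet p q) : Disjoint S S' := by
  rw [Finset.disjoint_left]
  intro a ha ha'
  have h1 : a ∈ extSet p q := by rw [← h]; exact_mod_cast ha
  have h2 : a ∈ intSet p q := by rw [← h']; exact_mod_cast ha'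
  exact (mem_int_iff a).1 h2 h1

theorem gammaExt_fix (i : Fin (p + q)) (hi : i ∈ intSet p q) : gammaExt p q i = i := by
  apply List.formPerm_apply_of_notMem
  simp only [List.mem_take_iff_getElem, not_exists]
  rintro j hj rfl
  simp [intSet] at hj hi
  omega

theorem gammaInt_fix (i : Fin (p + q)) (hi : i ∈ extSet p q) : gammaInt p q i = i := by
  apply List.formPerm_apply_of_notMem
  simp only [List.mem_drop_iff_getElem, not_exists]
  rintro j hj rfl
  simp [extSet] at hi

theorem gammaExt_mem (i : Fin (p + q)) : gammaExt p q i ∈ extSet p q ↔ i ∈ extSet p q := by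
  obtain ⟨S, hS, _, hc⟩ := ext_cycle p q
  rw [← hS]; exact hc.apply_mem_iff

theorem gammaInt_mem (i : Fin (p + q)) : gammaInt p q i ∈ intSet p q ↔ i ∈ intSet p q := by
  obtain ⟨S, hS, _, hc⟩ := int_cycle p q
  rw [← hS]; exact hc.apply_mem_iff

theorem gammaExt_same (i j : Fin (p + q)) (hi : i ∈ extSet p q) (hj : j ∈ extSet p q) :
    (gammaExt p q).SameCycle i j := by
  obtain ⟨S, hS, _, hc⟩ := ext_cycle p q
  rw [← hS] at hi hj; exact hc.2 hi hj

theorem gammaInt_same (i j : Fin (p + q)) (hi : i ∈ intSet p q) (hj : j ∈ intSet p q) :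
    (gammaInt p q).SameCycle i j := by
  obtain ⟨S, hS, _, hc⟩ := int_cycle p q
  rw [← hS] at hi hj; exact hc.2 hi hj

theorem gammaAnn_ext (T : Set (Fin (p + q))) (a : Fin (p + q)) (ha : a ∈ extSet p q) :
    induced (gammaAnn p q) T a = induced (gammaExt p q) T a := by
  symm
  refine induced_congr _ _ (extSet p q) T (fun b hb => (gammaExt_mem b).2 hb) ?_ a ha
  intro b hb
  simp [gammaAnn, gammaInt_fix b hb]

theorem gammaAnn_int (T : Set (Fin (p + q))) (a : Fin (p + q)) (ha : a ∈ intSet p q) :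
    induced (gammaAnn p q) T a = induced (gammaInt p q) T a := by
  symm
  refine induced_congr _ _ (intSet p q) T (fun b hb => (gammaInt_mem b).2 hb) ?_ a ha
  intro b hb
  simp [gammaAnn, gammaExt_fix _ ((gammaInt_mem b).2 hb)]

theorem lamPerm_ext (x y : Fin (p + q)) (hx : x ∈ extSet p q) (hy : y ∈ intSet p q)
    (T : Set (Fin (p + q))) (hT : T ⊆ extSet p q) (hxT : x ∉ T) (a : Fin (p + q)) (ha : a ∈ T) :
    induced (lamPerm p q x y) T a = induced (gammaExt p q) T a := by
  obtain ⟨S, hS, hSc, hc⟩ := ext_cycle p q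
  obtain ⟨S', hS', hSc', hc'⟩ := int_cycle p q
  have hx' : x ∈ S := by rw [← hS] at hx; exact_mod_cast hx
  have hy' : y ∈ S' := by rw [← hS'] at hy; exact_mod_cast hy
  have := lamList_induced _ _ S S' hc hc' (ext_int_disj hS hS') x y hx' hy' T
    (fun z hz => ⟨by rw [hS]; exact hT hz, fun h => hxT (by rw [← (h : z = x)]; exact hz)⟩) a ha
  rw [hSc, hSc'] at this
  exact this

theorem lamPerm_int (x y : Fin (p + q)) (hx : x ∈ extSet p q) (hy : y ∈ intSet p q)
    (T : Set (Fin (p + q))) (hT : T ⊆ intSet p q) (hyT : y ∉ T) (a : Fin (p + q)) (ha : a ∈ T) :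
    induced (lamPerm p q x y) T a = induced (gammaInt p q) T a := by
  obtain ⟨S, hS, hSc, hc⟩ := ext_cycle p q
  obtain ⟨S', hS', hSc', hc'⟩ := int_cycle p q
  have hx' : x ∈ S := by rw [← hS] at hx; exact_mod_cast hx
  have hy' : y ∈ S' := by rw [← hS'] at hy; exact_mod_cast hy
  have h1 := lamList_symm _ _ S S' hc hc' (ext_int_disj hS hS') x y hx' hy'
  have := lamList_induced _ _ S' S hc' hc (ext_int_disj hS hS').symm y x hy' hx' T
    (fun z hz => ⟨by rw [hS']; exact hT hz, fun h => hyT (by rw [← (h : z = y)]; exact hz)⟩) a ha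
  rw [← h1, hSc, hSc'] at this
  exact this

theorem lamPerm_cross (x y : Fin (p + q)) (hx : x ∈ extSet p q) (hy : y ∈ intSet p q)
    (e : Fin (p + q)) (he : e ∈ extSet p q) (hl : lamPerm p q x y e ∉ extSet p q) :
    gammaExt p q e = x := by
  obtain ⟨S, hS, hSc, hc⟩ := ext_cycle p q
  obtain ⟨S', hS', hSc', hc'⟩ := int_cycle p q
  have hy' : y ∈ S' := by rw [← hS'] at hy; exact_mod_cast hy
  have h : ∀ z, z ∈ extSet p q ↔ z ∈ S := fun z => by rw [← hS]; exact_mod_cast Iff.rfl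
  have := lamList_cross _ _ S S' hc hc' (ext_int_disj hS hS') x y ((h x).1 hx) hy' e ((h e).1 he)
  rw [hSc, hSc'] at this
  exact this (fun h' => hl ((h _).2 h'))

theorem orbit_mem {π : Set (Set (Fin (p + q)))} {τ : Equiv.Perm (Fin (p + q))}
    (h : {A | IsOrbit τ A} = π) {A : Set (Fin (p + q))} (hA : A ∈ π) {x : Fin (p + q)}
    (hx : x ∈ A) (y : Fin (p + q)) : y ∈ A ↔ τ.SameCycle x y := by
  rw [← h] at hA
  obtain ⟨a, rfl⟩ := hA
  have hx : τ.SameCycle a x := hx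
  exact ⟨fun hy => hx.symm.trans hy, fun hy => hx.trans hy⟩

theorem orbit_exists {π : Set (Set (Fin (p + q)))} {τ : Equiv.Perm (Fin (p + q))}
    (h : {A | IsOrbit τ A} = π) (x : Fin (p + q)) : ∃ A ∈ π, x ∈ A := by
  refine ⟨{b | τ.SameCycle x b}, ?_, Equiv.Perm.SameCycle.refl _ _⟩
  rw [← h]; exact ⟨x, rfl⟩

theorem same_iff {π : Set (Set (Fin (p + q)))} {τ σ : Equiv.Perm (Fin (p + q))}
    (h : {A | IsOrbit τ A} = π) (h' : {A | IsOrbit σ A} = π) (x y : Fin (p + q)) :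
    τ.SameCycle x y ↔ σ.SameCycle x y := by
  obtain ⟨A, hA, hx⟩ := orbit_exists h x
  rw [← orbit_mem h hA hx, ← orbit_mem h' hA hx]

theorem ac1_transfer {π : Set (Set (Fin (p + q)))} {τ σ : Equiv.Perm (Fin (p + q))}
    (h : {A | IsOrbit τ A} = π) (h' : {A | IsOrbit σ A} = π) (hac : AC1 p q τ) : AC1 p q σ := by
  obtain ⟨a, b, c, d, hd, h1, h2⟩ := hac
  refine ⟨a, b, c, d, hd, h1, ?_⟩
  rw [mapsSwap2_iff _ _ _ _ _ hd] at h2 ⊢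
  simpa only [same_iff h h'] using h2

/-- A standard permutation induces `g` on subsets of one-sided orbits. -/
theorem std_induced {τ g : Equiv.Perm (Fin (p + q))} {A T S : Set (Fin (p + q))}
    (hA : IsOrbit τ A) (hAS : A ⊆ S)
    (hstd : ∀ b ∈ A ∩ S, induced τ (A ∩ S) b = induced g (A ∩ S) b) (hT : T ⊆ A)
    (a : Fin (p + q)) (ha : a ∈ T) : induced τ T a = induced g T a := by
  rw [Set.inter_eq_left.2 hAS] at hstd
  have hcl : ∀ b ∈ A, τ b ∈ A := by
    obtain ⟨z, rfl⟩ := hA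
    intro b hb
    exact Equiv.Perm.sameCycle_apply_right.2 hb
  rw [← induced_sub g A T hT a ha]
  refine induced_congr _ _ A T hcl ?_ a (hT ha)
  intro b hb
  rw [← hstd b hb, induced_one _ _ _ (hcl b hb)]

theorem one_side {π : Set (Set (Fin (p + q)))} {B₀ A : Set (Fin (p + q))}
    (huniq : ∀ B ∈ π, ConnectingBlock p q B → B = B₀) (hA : A ∈ π) (hne : A ≠ B₀) :
    A ⊆ extSet p q ∨ A ⊆ intSet p q := by
  by_contra h
  push Not at h
  obtain ⟨h1, h2⟩ := h
  obtain ⟨u, hu, hu'⟩ := Set.not_subset.1 h1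
  obtain ⟨v, hv, hv'⟩ := Set.not_subset.1 h2
  rw [mem_int_iff, not_not] at hv'
  exact hne (huniq A hA ⟨⟨v, hv, hv'⟩, ⟨u, hu, (mem_int_iff u).2 hu'⟩⟩)

theorem one_side' {π : Set (Set (Fin (p + q)))} {B₀ : Set (Fin (p + q))}
    {τ : Equiv.Perm (Fin (p + q))} (h : {A | IsOrbit τ A} = π)
    (huniq : ∀ B ∈ π, ConnectingBlock p q B → B = B₀) {x y a : Fin (p + q)}
    (hx : x ∈ extSet p q) (hy : y ∈ intSet p q) (hxy : τ.SameCycle x y)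
    (hxa : ¬ τ.SameCycle x a) :
    ∃ A, IsOrbit τ A ∧ (∀ z, z ∈ A ↔ τ.SameCycle a z) ∧ (A ⊆ extSet p q ∨ A ⊆ intSet p q) := by
  obtain ⟨A, hA, ha⟩ := orbit_exists h a
  obtain ⟨B, hB, hxB⟩ := orbit_exists h x
  have hyB := (orbit_mem h hB hxB y).2 hxy
  have hBB := huniq B hB ⟨⟨x, hxB, hx⟩, ⟨y, hyB, hy⟩⟩
  refine ⟨A, by rw [← h] at hA; exact hA, orbit_mem h hA ha, one_side huniq hA ?_⟩
  rintro rfl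
  rw [← hBB] at ha
  exact hxa ((orbit_mem h hB hxB a).1 ha)

theorem no_ac2 {π : Set (Set (Fin (p + q)))} {B₀ : Set (Fin (p + q))}
    {τ : Equiv.Perm (Fin (p + q))} (h : {A | IsOrbit τ A} = π)
    (huniq : ∀ B ∈ π, ConnectingBlock p q B → B = B₀) (hstd : AnnStandard p q τ) :
    ¬ AC2 p q τ := by
  rintro ⟨a, b, c, x, y, hd, hx, hy, ⟨hl1, -, -⟩, ⟨h1, h2, h3⟩, h4, h5⟩
  simp only [List.pairwise_cons, List.mem_cons, List.not_mem_nil] at hd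
  have hbc : b ≠ c := hd.2.1 c (by simp)
  have hax : a ≠ x := hd.1 x (by simp)
  have hay : a ≠ y := hd.1 y (by simp)
  have hbx : b ≠ x := hd.2.1 x (by simp)
  have hby : b ≠ y := hd.2.1 y (by simp)
  have hcx : c ≠ x := hd.2.2.1 x (by simp)
  have hcy : c ≠ y := hd.2.2.1 y (by simp)
  have hac : τ.SameCycle a c := by
    have := induced_same τ {a, b, c, x, y} a (by simp); rwa [h1] at this
  have hcb : τ.SameCycle c b := by
    have := induced_same τ {a, b, c, x, y} c (by simp); rwa [h2] at this
  have hxy : τ.SameCycle x y := by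
    have := induced_same τ {a, b, c, x, y} x (by simp); rwa [h4] at this
  have hxa : ¬ τ.SameCycle x a := by
    intro h'
    rcases swap_orbit τ _ x y a h4 h5 (by simp) h' with h' | h'
    · exact hax h'
    · exact hay h'
  obtain ⟨A, hA, hmem, hside⟩ := one_side' h huniq hx hy hxy hxa
  have hTA : ({a, b, c} : Set (Fin (p + q))) ⊆ A := by
    intro z hz
    simp only [Set.mem_insert_iff, Set.mem_singleton_iff] at hz
    rw [hmem]
    rcases hz with rfl | rfl | rfl
    · exact Equiv.Perm.SameCycle.refl _ _
    · exact hac.trans hcb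
    · exact hac
  have hT : induced τ {a, b, c} a = c := by
    rw [← induced_sub τ {a, b, c, x, y} {a, b, c} ?_ a (by simp), induced_one _ _ _ ?_, h1]
    · rw [h1]; simp
    · intro z hz
      simp only [Set.mem_insert_iff, Set.mem_singleton_iff] at hz ⊢
      tauto
  rcases hside with hs | hs
  · rw [std_induced hA hs (hstd.1 A hA).1 hTA a (by simp),
      ← lamPerm_ext x y hx hy _ (hTA.trans hs) (by simp [hax.symm, hbx.symm, hcx.symm]) a (by simp), hl1] at hT
    exact hbc hT
  · rw [std_induced hA hs (hstd.1 A hA).2 hTA a (by simp),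
      ← lamPerm_int x y hx hy _ (hTA.trans hs) (by simp [hay.symm, hby.symm, hcy.symm]) a (by simp), hl1] at hT
    exact hbc hT

theorem ac3_ac1 {π : Set (Set (Fin (p + q)))} {B₀ : Set (Fin (p + q))}
    {τ : Equiv.Perm (Fin (p + q))} (h : {A | IsOrbit τ A} = π)
    (huniq : ∀ B ∈ π, ConnectingBlock p q B → B = B₀) (hac3 : AC3 p q τ) : AC1 p q τ := by
  obtain ⟨a, b, c, d, x, y, hd, hx, hy, ⟨hl1, hl2, hl3, hl4⟩, ⟨h1, h2, h3, h4⟩, h5, h6⟩ := hac3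
  have hd4 : List.Pairwise (· ≠ ·) [a, b, c, d] :=
    List.Pairwise.sublist (l₂ := [a, b, c, d, x, y]) (by simp) hd
  simp only [List.pairwise_cons, List.mem_cons, List.not_mem_nil] at hd
  have hac' : a ≠ c := hd.1 c (by simp)
  have hbd' : b ≠ d := hd.2.1 d (by simp)
  have hax : a ≠ x := hd.1 x (by simp)
  have hay : a ≠ y := hd.1 y (by simp)
  have hbx : b ≠ x := hd.2.1 x (by simp)
  have hby : b ≠ y := hd.2.1 y (by simp)
  have hcx : c ≠ x := hd.2.2.1 x (by simp)
  have hcy : c ≠ y := hd.2.2.1 y (by simp)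
  have hdx : d ≠ x := hd.2.2.2.1 x (by simp)
  have hdy : d ≠ y := hd.2.2.2.1 y (by simp)
  have hac : τ.SameCycle a c := by
    have := induced_same τ {a, b, c, d, x, y} a (by simp); rwa [h1] at this
  have hbd : τ.SameCycle b d := by
    have := induced_same τ {a, b, c, d, x, y} b (by simp); rwa [h3] at this
  have hxy : τ.SameCycle x y := by
    have := induced_same τ {a, b, c, d, x, y} x (by simp); rwa [h5] at this
  have hxa : ¬ τ.SameCycle x a := by
    intro h'
    rcases swap_orbit τ _ x y a h5 h6 (by simp) h' with h' | h'
    · exact hax h'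
    · exact hay h'
  have hxb : ¬ τ.SameCycle x b := by
    intro h'
    rcases swap_orbit τ _ x y b h5 h6 (by simp) h' with h' | h'
    · exact hbx h'
    · exact hby h'
  have hswap : MapsSwap2 τ {a, b, c, d} a b c d := by
    have hsub : ({a, b, c, d} : Set (Fin (p + q))) ⊆ {a, b, c, d, x, y} := by
      intro z hz
      simp only [Set.mem_insert_iff, Set.mem_singleton_iff] at hz ⊢
      tauto
    refine ⟨?_, ?_, ?_, ?_⟩
    · rw [← induced_sub τ _ _ hsub a (by simp), induced_one _ _ _ (by rw [h1]; simp), h1]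
    · rw [← induced_sub τ _ _ hsub c (by simp), induced_one _ _ _ (by rw [h2]; simp), h2]
    · rw [← induced_sub τ _ _ hsub b (by simp), induced_one _ _ _ (by rw [h3]; simp), h3]
    · rw [← induced_sub τ _ _ hsub d (by simp), induced_one _ _ _ (by rw [h4]; simp), h4]
  obtain ⟨A, hA, hmem, hside⟩ := one_side' h huniq hx hy hxy hxa
  obtain ⟨A', hA', hmem', hside'⟩ := one_side' h huniq hx hy hxy hxb
  have haA : a ∈ A := (hmem a).2 (Equiv.Perm.SameCycle.refl _ _)
  have hcA : c ∈ A := (hmem c).2 hac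
  have hbA : b ∈ A' := (hmem' b).2 (Equiv.Perm.SameCycle.refl _ _)
  have hdA : d ∈ A' := (hmem' d).2 hbd
  have hpass : ∀ e e', e ∈ extSet p q → lamPerm p q x y e ∉ extSet p q → e' ∈ extSet p q →
      lamPerm p q x y e' ∉ extSet p q → e = e' := by
    intro e e' he1 he2 he1' he2'
    apply (gammaExt p q).injective
    rw [lamPerm_cross x y hx hy e he1 he2, lamPerm_cross x y hx hy e' he1' he2']
  have hxT : x ∉ ({a, b, c, d} : Set (Fin (p + q))) := by
    simp [hax.symm, hbx.symm, hcx.symm, hdx.symm]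
  have hyT : y ∉ ({a, b, c, d} : Set (Fin (p + q))) := by
    simp [hay.symm, hby.symm, hcy.symm, hdy.symm]
  refine ⟨a, b, c, d, hd4, ?_, hswap⟩
  rcases hside with hs | hs <;> rcases hside' with hs' | hs'
  · have hT : ({a, b, c, d} : Set (Fin (p + q))) ⊆ extSet p q := by
      intro z hz
      simp only [Set.mem_insert_iff, Set.mem_singleton_iff] at hz
      rcases hz with rfl | rfl | rfl | rfl
      exacts [hs haA, hs' hbA, hs hcA, hs' hdA]
    have key : ∀ z ∈ ({a, b, c, d} : Set (Fin (p + q))),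
        induced (gammaAnn p q) {a, b, c, d} z = induced (lamPerm p q x y) {a, b, c, d} z := by
      intro z hz
      rw [gammaAnn_ext _ z (hT hz), lamPerm_ext x y hx hy _ hT hxT z hz]
    refine ⟨?_, ?_, ?_, ?_⟩ <;> rw [key _ (by simp)] <;> assumption
  · exact (no_double_pass (lamPerm p q x y) (extSet p q) {a, b, c, d} hpass a b c d (by simp)
      (by simp) (hs haA) (hs hcA) ((mem_int_iff b).1 (hs' hbA)) ((mem_int_iff d).1 (hs' hdA))
      hac' hl1 hl3).elim
  · exact (no_double_pass (lamPerm p q x y) (extSet p q) {a, b, c, d} hpass b c d a (by simp)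
      (by simp) (hs' hbA) (hs' hdA) ((mem_int_iff c).1 (hs hcA)) ((mem_int_iff a).1 (hs haA))
      hbd' hl2 hl4).elim
  · have hT : ({a, b, c, d} : Set (Fin (p + q))) ⊆ intSet p q := by
      intro z hz
      simp only [Set.mem_insert_iff, Set.mem_singleton_iff] at hz
      rcases hz with rfl | rfl | rfl | rfl
      exacts [hs haA, hs' hbA, hs hcA, hs' hdA]
    have key : ∀ z ∈ ({a, b, c, d} : Set (Fin (p + q))),
        induced (gammaAnn p q) {a, b, c, d} z = induced (lamPerm p q x y) {a, b, c, d} z := by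
      intro z hz
      rw [gammaAnn_int _ z (hT hz), lamPerm_int x y hx hy _ hT hyT z hz]
    refine ⟨?_, ?_, ?_, ?_⟩ <;> rw [key _ (by simp)] <;> assumption

theorem std_annNC {π : Set (Set (Fin (p + q)))} {B₀ : Set (Fin (p + q))}
    {τ σ : Equiv.Perm (Fin (p + q))} (h : {A | IsOrbit τ A} = π) (h' : {A | IsOrbit σ A} = π)
    (huniq : ∀ B ∈ π, ConnectingBlock p q B → B = B₀) (hstd : AnnStandard p q τ)
    (hσ : AnnNC p q σ) : AnnNC p q τ := by
  have h1 : ¬ AC1 p q τ := fun hc => hσ.2.1 (ac1_transfer h h' hc)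
  exact ⟨hstd, h1, no_ac2 h huniq hstd, fun hc => h1 (ac3_ac1 h huniq hc)⟩

/-- `G` acts on each side of each block as the induced forward cycle. -/
def SideCyc (p q : ℕ) (π : Set (Set (Fin (p + q)))) (G : Equiv.Perm (Fin (p + q))) : Prop :=
  ∀ A ∈ π, (∀ b ∈ A ∩ extSet p q, G b = induced (gammaExt p q) (A ∩ extSet p q) b) ∧
    (∀ b ∈ A ∩ intSet p q, G b = induced (gammaInt p q) (A ∩ intSet p q) b)

theorem sideCyc_unique {π : Set (Set (Fin (p + q)))} (hπ : ∀ x, ∃ A ∈ π, x ∈ A)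
    {G G' : Equiv.Perm (Fin (p + q))} (h : SideCyc p q π G) (h' : SideCyc p q π G') : G = G' := by
  ext x : 1
  obtain ⟨A, hA, hx⟩ := hπ x
  by_cases hxe : x ∈ extSet p q
  · rw [(h A hA).1 x ⟨hx, hxe⟩, (h' A hA).1 x ⟨hx, hxe⟩]
  · have hxi := (mem_int_iff x).2 hxe
    rw [(h A hA).2 x ⟨hx, hxi⟩, (h' A hA).2 x ⟨hx, hxi⟩]

/-- First half: undoing the passage of a standard permutation. -/
theorem undo_side {π : Set (Set (Fin (p + q)))} {τ : Equiv.Perm (Fin (p + q))}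
    (hτ : {A | IsOrbit τ A} = π) {B₀ S : Set (Fin (p + q))} (hB₀ : B₀ ∈ π)
    (hS : ∀ A ∈ π, ∀ b ∈ A, ∀ c ∈ A, b ∈ S → c ∉ S → A = B₀)
    {u v : Fin (p + q)} (hu : u ∈ B₀) (huS : u ∈ S) (huτ : τ u ∉ S) (hvS : v ∉ S)
    (huu : ∀ b ∈ B₀, b ∈ S → τ b ∉ S → b = u) (hvv : ∀ b ∈ B₀, b ∉ S → τ b ∈ S → b = v)
    {A : Set (Fin (p + q))} (hA : A ∈ π) (b : Fin (p + q)) (hb : b ∈ A ∩ S) :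
    induced τ (A ∩ S) b = (τ * Equiv.swap u v) b := by
  have hτA : τ b ∈ A := (orbit_mem hτ hA hb.1 _).2
    (Equiv.Perm.sameCycle_apply_right.2 (Equiv.Perm.SameCycle.refl _ _))
  have hbv : b ≠ v := fun h => hvS (h ▸ hb.2)
  by_cases hbu : b = u
  · subst hbu
    have hAB : A = B₀ := hS A hA b hb.1 _ hτA huS huτ
    subst hAB
    obtain ⟨w, hw, hsame, hw2, he⟩ := induced_pred τ (A ∩ S) b hb (fun h => huτ h.2)
    have hwA : w ∈ A := (orbit_mem hτ hA hb.1 _).2 hsame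
    have := hvv w hwA (fun h => hw ⟨hwA, h⟩) hw2.2
    subst this
    rw [he]; simp
  · rw [induced_one]
    · simp [Equiv.swap_apply_of_ne_of_ne hbu hbv]
    · refine ⟨hτA, ?_⟩
      by_contra h
      have hAB : A = B₀ := hS A hA b hb.1 _ hτA hb.2 h
      subst hAB
      exact hbu (huu b hb.1 hb.2 h)

theorem std_decomp {π : Set (Set (Fin (p + q)))} {τ : Equiv.Perm (Fin (p + q))}
    (hτ : {A | IsOrbit τ A} = π) {B₀ : Set (Fin (p + q))} (hB₀ : B₀ ∈ π)
    (hconn : ConnectingBlock p q B₀) (huniq : ∀ B ∈ π, ConnectingBlock p q B → B = B₀)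
    (hstd : AnnStandard p q τ) :
    ∃ u ∈ B₀ ∩ extSet p q, ∃ v ∈ B₀ ∩ intSet p q, SideCyc p q π (τ * Equiv.swap u v) := by
  have horb : ∀ A ∈ π, IsOrbit τ A := fun A hA => by rw [← hτ] at hA; exact hA
  obtain ⟨⟨u, ⟨hu, huτ⟩, huu⟩, ⟨v, ⟨hv, hvτ⟩, hvv⟩⟩ := hstd.2 B₀ (horb B₀ hB₀) hconn.1 hconn.2
  refine ⟨u, hu, v, hv, ?_⟩
  intro A hA
  constructor
  · intro b hb
    rw [← (hstd.1 A (horb A hA)).1 b hb]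
    symm
    refine undo_side hτ hB₀ ?_ hu.1 hu.2 ((mem_int_iff _).1 huτ) ((mem_int_iff _).1 hv.2) ?_ ?_ hA b
      hb
    · intro A hA b hb c hc h1 h2
      exact huniq A hA ⟨⟨b, hb, h1⟩, ⟨c, hc, (mem_int_iff _).2 h2⟩⟩
    · intro b h1 h2 h3
      exact huu b ⟨⟨h1, h2⟩, (mem_int_iff _).2 h3⟩
    · intro b h1 h2 h3
      exact hvv b ⟨⟨h1, (mem_int_iff _).2 h2⟩, h3⟩
  · intro b hb
    rw [← (hstd.1 A (horb A hA)).2 b hb, Equiv.swap_comm]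
    symm
    have hE : ∀ z, z ∉ intSet p q ↔ z ∈ extSet p q := fun z => by rw [mem_int_iff, not_not]
    refine undo_side hτ hB₀ ?_ hv.1 hv.2 ((hE _).2 hvτ) ((hE _).2 hu.2) ?_ ?_ hA b hb
    · intro A hA b hb c hc h1 h2
      exact huniq A hA ⟨⟨c, hc, (hE _).1 h2⟩, ⟨b, hb, h1⟩⟩
    · intro b h1 h2 h3
      exact hvv b ⟨⟨h1, h2⟩, (hE _).1 h3⟩
    · intro b h1 h2 h3
      exact huu b ⟨⟨h1, (hE _).1 h2⟩, h3⟩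

/-- The side map is transitive on each side of each block. -/
theorem side_same {C : Set (Fin (p + q))} {G g : Equiv.Perm (Fin (p + q))}
    (hG : ∀ b ∈ C, G b = induced g C b) {a b : Fin (p + q)} (ha : a ∈ C) (hb : b ∈ C)
    (hg : g.SameCycle a b) : G.SameCycle a b := by
  obtain ⟨n, hn⟩ := same_iter g hg
  obtain ⟨m, hm, _⟩ := induced_reach g C n a (by rwa [hn])
  rw [hn] at hm
  have h : ∀ m, (induced g C)^[m] a ∈ C ∧ (⇑G)^[m] a = (induced g C)^[m] a := by
    intro m
    induction m with
    | zero => exact ⟨ha, rfl⟩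
    | succ m ih =>
      rw [Function.iterate_succ_apply', Function.iterate_succ_apply', ih.2]
      exact ⟨induced_mem g C _ ih.1, hG _ ih.1⟩
  exact same_of_iter G m (by rw [(h m).2, hm])

/-- The merged permutation joins `u` and `v`. -/
theorem merge_same (G : Equiv.Perm (Fin (p + q))) (S : Set (Fin (p + q)))
    (hGS : ∀ a, a ∉ S → G a ∉ S) (u v : Fin (p + q)) (hu : u ∈ S) (hv : v ∉ S) :
    (G * Equiv.swap u v).SameCycle u v := by
  set τ := G * Equiv.swap u v with hτ
  have key : ∀ n, (⇑G)^[n + 1] v ∉ S ∧ (τ.SameCycle u v ∨ τ.SameCycle u ((⇑G)^[n + 1] v)) := by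
    intro n
    induction n with
    | zero =>
      refine ⟨hGS v hv, Or.inr ?_⟩
      have : τ u = G v := by simp [hτ]
      change τ.SameCycle u (G v)
      rw [← this]
      exact Equiv.Perm.sameCycle_apply_right.2 (Equiv.Perm.SameCycle.refl _ _)
    | succ n ih =>
      rw [Function.iterate_succ_apply' _ (n + 1)]
      refine ⟨hGS _ ih.1, ?_⟩
      rcases ih.2 with h | h
      · exact Or.inl h
      · by_cases hz : (⇑G)^[n + 1] v = v
        · rw [hz] at h; exact Or.inl h
        · right
          have hzu : (⇑G)^[n + 1] v ≠ u := fun h' => ih.1 (h' ▸ hu)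
          have : τ ((⇑G)^[n + 1] v) = G ((⇑G)^[n + 1] v) := by
            rw [hτ, Equiv.Perm.mul_apply, Equiv.swap_apply_of_ne_of_ne hzu hz]
          rw [← this]
          exact Equiv.Perm.sameCycle_apply_right.2 h
  obtain ⟨k, hk, hk2⟩ := perm_return G v
  have := (key (k - 1)).2
  rw [Nat.sub_add_cancel hk, hk2] at this
  exact this.elim id id

theorem merge_same_of (G : Equiv.Perm (Fin (p + q))) (u v : Fin (p + q))
    (huv : (G * Equiv.swap u v).SameCycle u v) {a b : Fin (p + q)} (h : G.SameCycle a b) :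
    (G * Equiv.swap u v).SameCycle a b := by
  set τ := G * Equiv.swap u v with hτ
  have step : ∀ z, τ.SameCycle z (G z) := by
    intro z
    have hz : G z = τ (Equiv.swap u v z) := by simp [hτ]
    rw [hz, Equiv.Perm.sameCycle_apply_right]
    by_cases h1 : z = u
    · subst h1; simpa using huv
    · by_cases h2 : z = v
      · subst h2; simpa using huv.symm
      · rw [Equiv.swap_apply_of_ne_of_ne h1 h2]
  obtain ⟨n, rfl⟩ := same_iter G h
  clear h
  induction n with
  | zero => exact Equiv.Perm.SameCycle.refl _ _
  | succ n ih =>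
    rw [Function.iterate_succ_apply']
    exact ih.trans (step _)

theorem merge_side (G : Equiv.Perm (Fin (p + q))) (A S : Set (Fin (p + q)))
    (hGA : ∀ a, a ∈ A ∩ S → G a ∈ A ∩ S) (hGS : ∀ a, a ∉ S → G a ∉ S)
    (u v : Fin (p + q)) (hv : v ∉ S) (b : Fin (p + q)) (hb : b ∈ A ∩ S)
    (hA : ∀ z, (G * Equiv.swap u v).SameCycle b z → z ∈ A) :
    induced (G * Equiv.swap u v : Equiv.Perm (Fin (p + q))) (A ∩ S) b = G b := by
  have hbv : b ≠ v := fun h => hv (h ▸ hb.2)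
  by_cases hbu : b = u
  · subst hbu
    have h1 : (G * Equiv.swap b v) b = G v := by simp
    obtain ⟨w, hw, hs, hw2, he⟩ := induced_pred (G * Equiv.swap b v) (A ∩ S) b hb
      (by rw [h1]; exact fun h => hGS v hv h.2)
    have hwS : w ∉ S := fun h => hw ⟨hA w hs, h⟩
    have hwb : w ≠ b := fun h => hwS (h ▸ hb.2)
    rw [he]
    by_cases hwv : w = v
    · subst hwv; simp
    · have h2 : (G * Equiv.swap b v) w = G w := by
        rw [Equiv.Perm.mul_apply, Equiv.swap_apply_of_ne_of_ne hwb hwv]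
      rw [h2] at hw2
      exact absurd hw2.2 (hGS w hwS)
  · have h2 : (G * Equiv.swap u v) b = G b := by
      rw [Equiv.Perm.mul_apply, Equiv.swap_apply_of_ne_of_ne hbu hbv]
    rw [induced_one _ _ _ (by rw [h2]; exact hGA b hb), h2]

theorem merge_std {π : Set (Set (Fin (p + q)))} (hpart : Setoid.IsPartition π)
    {G : Equiv.Perm (Fin (p + q))} (hG : SideCyc p q π G)
    {B₀ : Set (Fin (p + q))} (hB₀ : B₀ ∈ π)
    (huniq : ∀ B ∈ π, ConnectingBlock p q B → B = B₀) {u v : Fin (p + q)}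
    (hu : u ∈ B₀ ∩ extSet p q) (hv : v ∈ B₀ ∩ intSet p q) :
    AnnStandard p q (G * Equiv.swap u v) ∧ {A | IsOrbit (G * Equiv.swap u v) A} = π := by
  have hπ : ∀ x, ∃ A ∈ π, x ∈ A := fun x => by
    obtain ⟨A, ⟨hA, hx⟩, _⟩ := hpart.2 x
    exact ⟨A, hA, hx⟩
  have hdis : ∀ A ∈ π, ∀ B ∈ π, ∀ x, x ∈ A → x ∈ B → A = B := fun A hA B hB x hx hx' =>
    (hpart.2 x).unique ⟨hA, hx⟩ ⟨hB, hx'⟩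
  have hE : ∀ z, z ∉ intSet p q ↔ z ∈ extSet p q := fun z => by rw [mem_int_iff, not_not]
  have hGe : ∀ A ∈ π, ∀ a ∈ A ∩ extSet p q, G a ∈ A ∩ extSet p q := fun A hA a ha => by
    rw [(hG A hA).1 a ha]; exact induced_mem _ _ _ ha
  have hGi : ∀ A ∈ π, ∀ a ∈ A ∩ intSet p q, G a ∈ A ∩ intSet p q := fun A hA a ha => by
    rw [(hG A hA).2 a ha]; exact induced_mem _ _ _ ha
  have hGe' : ∀ a, a ∈ extSet p q → G a ∈ extSet p q := fun a ha => by
    obtain ⟨A, hA, hx⟩ := hπ a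
    exact (hGe A hA a ⟨hx, ha⟩).2
  have hGi' : ∀ a, a ∈ intSet p q → G a ∈ intSet p q := fun a ha => by
    obtain ⟨A, hA, hx⟩ := hπ a
    exact (hGi A hA a ⟨hx, ha⟩).2
  have hGA : ∀ A ∈ π, ∀ a ∈ A, G a ∈ A := fun A hA a ha => by
    by_cases h : a ∈ extSet p q
    · exact (hGe A hA a ⟨ha, h⟩).1
    · exact (hGi A hA a ⟨ha, (mem_int_iff a).2 h⟩).1
  set τ := G * Equiv.swap u v with hτ
  have huv : τ.SameCycle u v := by
    refine merge_same G (extSet p q) ?_ u v hu.2 ((mem_int_iff v).1 hv.2)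
    intro a ha
    rw [← mem_int_iff] at ha ⊢
    exact hGi' a ha
  have hτA : ∀ A ∈ π, ∀ a ∈ A, τ a ∈ A := fun A hA a ha => by
    rw [hτ, Equiv.Perm.mul_apply]
    apply hGA A hA
    by_cases h1 : a = u
    · subst h1
      rw [Equiv.swap_apply_left, hdis A hA B₀ hB₀ a ha hu.1]
      exact hv.1
    · by_cases h2 : a = v
      · subst h2
        rw [Equiv.swap_apply_right, hdis A hA B₀ hB₀ a ha hv.1]
        exact hu.1
      · rwa [Equiv.swap_apply_of_ne_of_ne h1 h2]
  have hτA' : ∀ A ∈ π, ∀ a ∈ A, ∀ z, τ.SameCycle a z → z ∈ A := by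
    intro A hA a ha z hz
    obtain ⟨n, rfl⟩ := same_iter τ hz
    clear hz
    induction n with
    | zero => exact ha
    | succ n ih => rw [Function.iterate_succ_apply']; exact hτA A hA _ ih
  have he : ∀ A ∈ π, ∀ a ∈ A ∩ extSet p q, ∀ b ∈ A ∩ extSet p q, τ.SameCycle a b :=
    fun A hA a ha b hb => merge_same_of G u v huv
      (side_same (hG A hA).1 ha hb (gammaExt_same a b ha.2 hb.2))
  have hi : ∀ A ∈ π, ∀ a ∈ A ∩ intSet p q, ∀ b ∈ A ∩ intSet p q, τ.SameCycle a b :=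
    fun A hA a ha b hb => merge_same_of G u v huv
      (side_same (hG A hA).2 ha hb (gammaInt_same a b ha.2 hb.2))
  have hmix : ∀ A ∈ π, ∀ a ∈ A ∩ extSet p q, ∀ b ∈ A ∩ intSet p q, τ.SameCycle a b := by
    intro A hA a ha b hb
    have := huniq A hA ⟨⟨a, ha⟩, ⟨b, hb⟩⟩
    subst this
    exact ((he A hA a ha u hu).trans huv).trans (hi A hA v hv b hb)
  have hblock : ∀ A ∈ π, ∀ a ∈ A, A = {b | τ.SameCycle a b} := by
    intro A hA a ha
    ext b
    constructor
    · intro hb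
      change τ.SameCycle a b
      by_cases h1 : a ∈ extSet p q <;> by_cases h2 : b ∈ extSet p q
      · exact he A hA a ⟨ha, h1⟩ b ⟨hb, h2⟩
      · exact hmix A hA a ⟨ha, h1⟩ b ⟨hb, (mem_int_iff b).2 h2⟩
      · exact (hmix A hA b ⟨hb, h2⟩ a ⟨ha, (mem_int_iff a).2 h1⟩).symm
      · exact hi A hA a ⟨ha, (mem_int_iff a).2 h1⟩ b ⟨hb, (mem_int_iff b).2 h2⟩
    · exact hτA' A hA a ha b
  have horb : {A | IsOrbit τ A} = π := by
    ext A
    constructor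
    · rintro ⟨a, rfl⟩
      obtain ⟨B, hB, haB⟩ := hπ a
      rw [← hblock B hB a haB]; exact hB
    · intro hA
      have hne : A.Nonempty := by
        rw [Set.nonempty_iff_ne_empty]; rintro rfl; exact hpart.1 hA
      obtain ⟨a, ha⟩ := hne
      exact ⟨a, hblock A hA a ha⟩
  have horb' : ∀ A, IsOrbit τ A → A ∈ π := fun A hA => by rw [← horb]; exact hA
  refine ⟨⟨?_, ?_⟩, horb⟩
  · intro A hA
    replace hA := horb' A hA
    constructor
    · intro b hb
      rw [← (hG A hA).1 b hb]
      refine merge_side G A (extSet p q) (hGe A hA) ?_ u v ((mem_int_iff v).1 hv.2) b hb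
        (hτA' A hA b hb.1)
      intro a ha
      rw [← mem_int_iff] at ha ⊢
      exact hGi' a ha
    · intro b hb
      rw [← (hG A hA).2 b hb, hτ, Equiv.swap_comm]
      refine merge_side G A (intSet p q) (hGi A hA) ?_ v u ((hE u).2 hu.2) b hb ?_
      · intro a ha
        rw [hE] at ha ⊢
        exact hGe' a ha
      · rw [Equiv.swap_comm, ← hτ]
        exact hτA' A hA b hb.1
  · intro A hA h1 h2
    replace hA := horb' A hA
    have := huniq A hA ⟨h1, h2⟩
    subst this
    have hτu : τ u = G v := by simp [hτ]
    have hτv : τ v = G u := by simp [hτ]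
    have hτn : ∀ z, z ≠ u → z ≠ v → τ z = G z := fun z h1 h2 => by
      rw [hτ, Equiv.Perm.mul_apply, Equiv.swap_apply_of_ne_of_ne h1 h2]
    refine ⟨⟨u, ⟨hu, by rw [hτu]; exact hGi' v hv.2⟩, ?_⟩,
      ⟨v, ⟨hv, by rw [hτv]; exact hGe' u hu.2⟩, ?_⟩⟩
    · rintro a ⟨ha, haτ⟩
      by_contra hne
      have hav : a ≠ v := fun h => (mem_int_iff v).1 hv.2 (h ▸ ha.2)
      rw [hτn a hne hav] at haτ
      exact (mem_int_iff _).1 haτ (hGe' a ha.2)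
    · rintro a ⟨ha, haτ⟩
      by_contra hne
      have hau : a ≠ u := fun h => (hE u).2 hu.2 (h ▸ ha.2)
      rw [hτn a hau hne] at haτ
      exact (hE _).2 haτ (hGi' a ha.2)

end Annular
/-- Proposition 4.6 3°: let `π ∈ NC_ann(p,q)` be a partition of `[p+q]` with exactly one
`(p,q)`-connecting block `B₀`.  Then every permutation of `[p+q]` which is standard in
`(p,q)`-annular sense and has orbit partition `π` belongs to `S_ann-nc(p,q)`;
consequently there are exactly `card(B₀ ∩ {1,…,p}) · card(B₀ ∩ {p+1,…,p+q})`
permutations `τ ∈ S_ann-nc(p,q)` with orbit partition `π`. -/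
theorem stmt_10 (p q : ℕ) (hp : 0 < p) (hq : 0 < q) (π : Set (Set (Fin (p + q))))
    (hpart : Setoid.IsPartition π) (B₀ : Set (Fin (p + q))) (hB₀ : B₀ ∈ π)
    (hconn : ConnectingBlock p q B₀)
    (huniq : ∀ B ∈ π, ConnectingBlock p q B → B = B₀)
    (hNC : ∃ σ : Equiv.Perm (Fin (p + q)), AnnNC p q σ ∧ {A | IsOrbit σ A} = π) :
    (∀ τ : Equiv.Perm (Fin (p + q)),
        AnnStandard p q τ → {A | IsOrbit τ A} = π → AnnNC p q τ) ∧
    Set.ncard {τ : Equiv.Perm (Fin (p + q)) | AnnNC p q τ ∧ {A | IsOrbit τ A} = π} =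
      (B₀ ∩ extSet p q).ncard * (B₀ ∩ intSet p q).ncard := by
  obtain ⟨σ, hσ, hσπ⟩ := hNC
  have part1 : ∀ τ : Equiv.Perm (Fin (p + q)),
      AnnStandard p q τ → {A | IsOrbit τ A} = π → AnnNC p q τ :=
    fun τ hτ hτπ => std_annNC hτπ hσπ huniq hτ hσ
  refine ⟨part1, ?_⟩
  obtain ⟨u₀, hu₀, v₀, hv₀, hG⟩ := std_decomp hσπ hB₀ hconn huniq hσ.1
  set G := σ * Equiv.swap u₀ v₀ with hGdef
  have himg : {τ : Equiv.Perm (Fin (p + q)) | AnnNC p q τ ∧ {A | IsOrbit τ A} = π} =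
      (fun z : Fin (p + q) × Fin (p + q) => G * Equiv.swap z.1 z.2) ''
        ((B₀ ∩ extSet p q) ×ˢ (B₀ ∩ intSet p q)) := by
    ext τ
    constructor
    · rintro ⟨hτ, hτπ⟩
      obtain ⟨u, hu, v, hv, hG'⟩ := std_decomp hτπ hB₀ hconn huniq hτ.1
      refine ⟨(u, v), ⟨hu, hv⟩, ?_⟩
      have := sideCyc_unique (orbit_exists hσπ) hG hG'
      change G * Equiv.swap u v = τ
      rw [this, mul_assoc, Equiv.swap_mul_self, mul_one]
    · rintro ⟨⟨u, v⟩, ⟨hu, hv⟩, rfl⟩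
      obtain ⟨h1, h2⟩ := merge_std hpart hG hB₀ huniq hu hv
      exact ⟨part1 _ h1 h2, h2⟩
  rw [himg, Set.ncard_image_of_injOn, Set.ncard_prod]
  rintro ⟨u, v⟩ ⟨hu, hv⟩ ⟨u', v'⟩ ⟨hu', hv'⟩ h
  have hs : Equiv.swap u v = Equiv.swap u' v' := mul_left_cancel h
  have hne : ∀ a b : Fin (p + q), a ∈ extSet p q → b ∈ intSet p q → a ≠ b :=
    fun a b ha hb hab => (mem_int_iff b).1 hb (hab ▸ ha)
  have h1 : Equiv.swap u' v' u = v := by rw [← hs]; simp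
  have huu : u = u' := by
    by_contra hc
    rw [Equiv.swap_apply_of_ne_of_ne hc (hne u v' hu.2 hv'.2)] at h1
    exact hne u v hu.2 hv.2 h1
  subst huu
  rw [Equiv.swap_apply_left] at h1
  rw [h1]
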